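/- arXiv:2601.21195 — 2 statements merged into one kernel-verified Lean document; each statement's English description precedes it below -/
import Mathlib

section
/- Let q be a prime power and x = (x_1,…,x_n) arbitrary weights. Then for every h ∈ B⁻ (an invertible lower triangular matrix) and every coset gB ∈ G/B, one has h·( gB · T_{G/B}(q,x) ) = ( (hg)B ) · T_{G/B}(q,x) in ℂ[G/B], where h acts on ℂ[G/B] by left multiplication on cosets (g'B ↦ (hg')B, extended linearly). -/
open scoped Classical
set_option synthInstance.maxHeartbeats 1000000
set_option maxHeartbeats 1000000

noncomputable section

namespace QTsetlin

/-- `M` is upper triangular. -/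
def upperTri {F : Type} [Field F] {n : ℕ} (M : Matrix (Fin n) (Fin n) F) : Prop :=
  ∀ i j : Fin n, j < i → M i j = 0

/-- `M` is lower triangular. -/
def lowerTri {F : Type} [Field F] {n : ℕ} (M : Matrix (Fin n) (Fin n) F) : Prop :=
  ∀ i j : Fin n, i < j → M i j = 0

variable (F : Type) [Field F] [Fintype F] [DecidableEq F] (n : ℕ)

/-- The general linear group `G = GL_n(F_q)`. -/
abbrev GLn := GL (Fin n) F

/-- The Borel subgroup `B` of invertible upper triangular matrices. -/
def Bsub : Subgroup (GLn F n) where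
  carrier := {g | upperTri (g : Matrix (Fin n) (Fin n) F)}
  one_mem' := by
    intro i j hij
    simp [Matrix.one_apply, (Fin.ne_of_lt hij).symm]
  mul_mem' := by
    intro a b ha hb i j hij
    exact Matrix.BlockTriangular.mul ha hb hij
  inv_mem' := by
    intro a ha
    have hdet : IsUnit ((a : Matrix (Fin n) (Fin n) F).det) :=
      (Matrix.isUnit_iff_isUnit_det _).mp a.isUnit
    have hinv : Invertible (a : Matrix (Fin n) (Fin n) F) :=
      Matrix.invertibleOfIsUnitDet _ hdet
    have h2 : ((a : Matrix (Fin n) (Fin n) F)⁻¹).BlockTriangular (id : Fin n → Fin n) :=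
      Matrix.blockTriangular_inv_of_blockTriangular ha
    show upperTri ((a⁻¹ : GLn F n) : Matrix (Fin n) (Fin n) F)
    rw [show ((a⁻¹ : GLn F n) : Matrix (Fin n) (Fin n) F)
        = (a : Matrix (Fin n) (Fin n) F)⁻¹ from Matrix.coe_units_inv a]
    exact h2

/-- The set of cosets `G/B`. -/
abbrev Cosets := GLn F n ⧸ Bsub F n

/-- permutation matrix of `π`: entry 1 in positions `(π j, j)`. -/
def permMat (π : Equiv.Perm (Fin n)) : Matrix (Fin n) (Fin n) F :=
  fun i j => if π j = i then 1 else 0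

lemma permMat_mul (π σ : Equiv.Perm (Fin n)) :
    permMat F n π * permMat F n σ = permMat F n (π * σ) := by
  ext i j
  rw [Matrix.mul_apply]
  simp only [permMat, mul_ite, ite_mul, one_mul, mul_one, mul_zero, zero_mul]
  rw [Finset.sum_eq_single (σ j)]
  · by_cases hi : π (σ j) = i <;> simp [Equiv.Perm.mul_apply, hi]
  · intro k _ hk
    simp [hk.symm]
  · simp

lemma permMat_one : permMat F n 1 = 1 := by
  ext i j
  simp [permMat, Matrix.one_apply, eq_comm]

/-- The permutation matrix of `π`, as an element of `GL_n(F)`. -/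
def permGL (π : Equiv.Perm (Fin n)) : GLn F n :=
  ⟨permMat F n π, permMat F n π⁻¹,
    by rw [permMat_mul, mul_inv_cancel, permMat_one],
    by rw [permMat_mul, inv_mul_cancel, permMat_one]⟩

/-- `f_i(t)`: identity matrix with an extra entry `t` in position `(r, c)`, as an
element of `GL_n(F)`. -/
def transvGL (r c : Fin n) (h : r ≠ c) (t : F) : GLn F n :=
  ⟨Matrix.transvection r c t, Matrix.transvection r c (-t),
    by rw [Matrix.transvection_mul_transvection_same _ _ h, add_neg_cancel,
      Matrix.transvection_zero],
    by rw [Matrix.transvection_mul_transvection_same _ _ h, neg_add_cancel,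
      Matrix.transvection_zero]⟩

variable (K : Type) [Field K]

/-- Matrix (row convention: row `gB` is `(gB) · T_{k+1}`) of the Hecke generator `T_{k+1}`
(paper indexing) on `ℂ[G/B]`:
`(gB)·T_i = g s_i B + ∑_{t ≠ 0} g f_i(t) B`, where `s_i` swaps (0-based) positions `k, k+1`
and `f_i(t)` has an extra entry `t` in (0-based) position `(k+1, k)`. -/
def genGB (k : ℕ) : Matrix (Cosets F n) (Cosets F n) K := fun C D =>
  if h : k + 1 < n then
    (if (QuotientGroup.mk (C.out * permGL F n
          (Equiv.swap ⟨k, Nat.lt_of_succ_lt h⟩ ⟨k + 1, h⟩)) : Cosets F n) = D then 1 else 0)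
    + ((Finset.univ.filter fun t : F => t ≠ 0 ∧
        (QuotientGroup.mk (C.out * transvGL F n ⟨k + 1, h⟩ ⟨k, Nat.lt_of_succ_lt h⟩
          (fun hc => by simp [Fin.ext_iff] at hc) t) : Cosets F n) = D).card : K)
  else 0

/-- Matrix of the product `T_k T_{k-1} ⋯ T_1` (paper indexing) on `ℂ[G/B]`. -/
def prodGenGB : ℕ → Matrix (Cosets F n) (Cosets F n) K
  | 0 => 1
  | k + 1 => genGB F n K k * prodGenGB k

/-- The (0-based) row index of the leading entry (the pivot `1` of the distinguished coset
representative) in the first column of a representative of the coset `C`. -/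
def pivotRow (C : Cosets F n) : ℕ :=
  sInf {i : ℕ | ∃ h : i < n,
    ((C.out : GLn F n) : Matrix (Fin n) (Fin n) F) ⟨i, h⟩
      ⟨0, Nat.lt_of_le_of_lt (Nat.zero_le i) h⟩ ≠ 0}

/-- Matrix of the weighting operator `X_{G/B}(q,x)`, where `q` is the cardinality of the
field: `gB ↦ (x_i / q^{n-i}) gB` with `i` the row index of the leading 1 in the first
column of the distinguished representative of `gB`. -/
def XGB (x : Fin n → K) : Matrix (Cosets F n) (Cosets F n) K := fun C D =>
  if D = C then
    (if h : pivotRow F n C < n then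
      x ⟨pivotRow F n C, h⟩ / (Fintype.card F : K) ^ (n - 1 - pivotRow F n C)
    else 0)
  else 0

/-- Matrix of the q-Tsetlin library operator
`T_{G/B}(q,x) = (∑_{i=1}^n T_{i-1} ⋯ T_1) ∘ X_{G/B}(q,x)` on `ℂ[G/B]` (row convention). -/
def TGB (x : Fin n → K) : Matrix (Cosets F n) (Cosets F n) K :=
  (∑ k ∈ Finset.range n, prodGenGB F n K k) * XGB F n K x

/-- The coset `gB` belongs to the double coset `[π] = B⁻ π B`. -/
def inDC (π : Equiv.Perm (Fin n)) (C : Cosets F n) : Prop :=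
  ∃ l b : GLn F n, lowerTri (l : Matrix (Fin n) (Fin n) F) ∧
    upperTri (b : Matrix (Fin n) (Fin n) F) ∧
    C = QuotientGroup.mk (l * permGL F n π * b)

/-!
Let `P_i` be the minimal parabolic subgroup `B ∪ B s_i B`. The Hecke generator `T_i` sends `gB` to
the sum of the cosets `g'B ≠ gB` with `g'P_i = gP_i`, so it commutes with left multiplication by
every element of `G`. The weight of `gB` depends only on the position of the first nonzero entry in
the first column of `g`, and left multiplication by an invertible lower triangular matrix does not
move that position.
-/

section MatrixLemmas

lemma col_ne_zero_of_isUnit {m R : Type*} [Fintype m] [DecidableEq m] [CommRing R] [Nontrivial R]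
    {M : Matrix m m R} (hM : IsUnit M) (j : m) : M.col j ≠ 0 := fun hcol =>
  ((Matrix.isUnit_iff_isUnit_det M).1 hM).ne_zero
    (Matrix.det_eq_zero_of_column_eq_zero j (congrFun hcol))

variable {m R : Type*} [LinearOrder m]

lemma update_id_lt_update_id_iff {i j : m} (hij : i ⋖ j) (a b : m) :
    Function.update id j i b < Function.update id j i a ↔ b < a ∧ ¬(a = j ∧ b = i) := by
  have hlt : i < j := hij.lt
  have hnexta : i < a → j ≤ a := hij.ge_of_gt
  have hnextb : i < b → j ≤ b := hij.ge_of_gt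
  simp only [Function.update_apply, id_eq]
  grind

lemma monotone_update_id {i j : m} (hij : i ⋖ j) : Monotone (Function.update id j i) :=
  fun a b hab => not_lt.1 fun hlt => hab.not_gt ((update_id_lt_update_id_iff hij a b).1 hlt).1

lemma isUpperTriangular_iff_of_covBy [Zero R] {i j : m} (hij : i ⋖ j) (M : Matrix m m R) :
    M.IsUpperTriangular ↔ M.BlockTriangular (Function.update id j i) ∧ M j i = 0 := by
  simp only [Matrix.BlockTriangular, update_id_lt_update_id_iff hij, id_eq]
  refine ⟨fun hM => ⟨fun a b h => hM h.1, hM hij.lt⟩, fun ⟨hM, hji⟩ a b hba => ?_⟩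
  by_cases hab : a = j ∧ b = i
  · rwa [hab.1, hab.2]
  · exact hM ⟨hba, hab⟩

variable [Fintype m]

lemma isUnit_diag_of_isUpperTriangular [CommRing R] {M : Matrix m m R} (hM : M.IsUpperTriangular)
    (hunit : IsUnit M) (i : m) : IsUnit (M i i) := by
  rw [Matrix.isUnit_iff_isUnit_det, Matrix.det_of_isUpperTriangular hM] at hunit
  exact isUnit_of_dvd_unit (Finset.dvd_prod_of_mem (fun i => M i i) (Finset.mem_univ i)) hunit

lemma isUnit_diag_of_isLowerTriangular [CommRing R] {M : Matrix m m R} (hM : M.IsLowerTriangular)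
    (hunit : IsUnit M) (i : m) : IsUnit (M i i) :=
  isUnit_diag_of_isUpperTriangular hM.transpose ((Matrix.isUnit_transpose M).2 hunit) i

lemma isLeast_support_mulVec [NonUnitalNonAssocSemiring R] [NoZeroDivisors R]
    {M : Matrix m m R} (hM : M.IsLowerTriangular) (hdiag : ∀ i, M i i ≠ 0) {v : m → R} {i : m}
    (hi : IsLeast (Function.support v) i) : IsLeast (Function.support (M.mulVec v)) i := by
  have hv : ∀ j < i, v j = 0 := fun j hj => not_not.1 fun hne => hj.not_ge (hi.2 hne)
  have hterm : ∀ a j, a ≤ i → j ≠ i → M a j * v j = 0 := by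
    intro a j hai hji
    rcases hji.lt_or_gt with hlt | hgt
    · rw [hv j hlt, mul_zero]
    · rw [hM (hai.trans_lt hgt), zero_mul]
  have hsum : ∀ a ≤ i, M.mulVec v a = M a i * v i := fun a hai =>
    Fintype.sum_eq_single i fun j hji => hterm a j hai hji
  refine ⟨?_, fun a ha => le_of_not_gt fun hai => ha ?_⟩
  · rw [Function.mem_support, hsum i le_rfl]
    exact mul_ne_zero (hdiag i) hi.1
  · rw [hsum a hai.le, hM hai, zero_mul]

end MatrixLemmas

section Parabolic

omit [Fintype F] [DecidableEq F]

/-- The standard parabolic subgroup of block upper triangular matrices in `GL`, the blocks being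
the fibres of `b`. -/
def parabolic {m α : Type*} [Fintype m] [DecidableEq m] [LinearOrder α] (R : Type*) [CommRing R]
    (b : m → α) : Subgroup (GL m R) where
  carrier := {g | (g : Matrix m m R).BlockTriangular b}
  one_mem' := Matrix.blockTriangular_one
  mul_mem' := Matrix.BlockTriangular.mul
  inv_mem' {g} hg := by
    let := g.invertible
    simpa only [Set.mem_ofPred_eq, Matrix.coe_units_inv] using
      Matrix.blockTriangular_inv_of_blockTriangular hg

variable {F n}

/-- The parabolic subgroup of matrices that are upper triangular except possibly at the entry
`(j, i)`. For `j` the successor of `i` it is the minimal parabolic subgroup `B ∪ B s B`, with `s`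
the transposition of `i` and `j`. -/
abbrev minimalParabolic (F : Type) [Field F] {n : ℕ} (i j : Fin n) : Subgroup (GLn F n) :=
  parabolic F (Function.update id j i)

lemma Bsub_le_parabolic {α : Type*} [LinearOrder α] {b : Fin n → α} (hb : Monotone b) :
    Bsub F n ≤ parabolic F b :=
  fun _ hg _ _ hij => hg _ _ (hb.reflect_lt hij)

lemma transvGL_inv_mul_apply_same {r c : Fin n} (hrc : r ≠ c) (t : F) (g : GLn F n) (a : Fin n) :
    ((transvGL F n r c hrc t)⁻¹ * g) r a = g r a - t * g c a := by
  rw [sub_eq_add_neg, ← neg_mul]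
  exact Matrix.transvection_mul_apply_same r c a (-t) _

lemma transvGL_mem_parabolic {α : Type*} [LinearOrder α] {b : Fin n → α} {r c : Fin n}
    (hrc : r ≠ c) (hb : b r ≤ b c) (t : F) : transvGL F n r c hrc t ∈ parabolic F b :=
  Matrix.blockTriangular_transvection hb t

variable {i j : Fin n}

lemma mem_Bsub_iff_of_covBy (hij : i ⋖ j) (g : GLn F n) :
    g ∈ Bsub F n ↔ g ∈ minimalParabolic F i j ∧ g j i = 0 :=
  isUpperTriangular_iff_of_covBy hij (g : Matrix (Fin n) (Fin n) F)

lemma transvGL_inv_mul_mem_Bsub_iff (hij : i ⋖ j) (hji : j ≠ i) (t : F) (g : GLn F n) :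
    (transvGL F n j i hji t)⁻¹ * g ∈ Bsub F n ↔
      g ∈ minimalParabolic F i j ∧ g j i = t * g i i := by
  have hf : transvGL F n j i hji t ∈ minimalParabolic F i j :=
    transvGL_mem_parabolic hji (by simp [hji.symm]) t
  rw [mem_Bsub_iff_of_covBy hij, Subgroup.mul_mem_cancel_left _ (inv_mem hf),
    transvGL_inv_mul_apply_same, sub_eq_zero]

lemma mk_out_mul_eq_iff (C D : Cosets F n) (g : GLn F n) :
    (QuotientGroup.mk (C.out * g) : Cosets F n) = D ↔ g⁻¹ * (C.out⁻¹ * D.out) ∈ Bsub F n := by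
  conv_lhs => rw [← QuotientGroup.out_eq' D, QuotientGroup.eq, mul_inv_rev, mul_assoc]

/-- The projection `G/B → G/P` onto the cosets of the minimal parabolic `P` at `i ⋖ j`; in terms of
flags, it forgets one subspace. -/
def toMinimalParabolicCoset (hij : i ⋖ j) :
    Cosets F n → GLn F n ⧸ minimalParabolic F i j :=
  Subgroup.quotientMapOfLE (Bsub_le_parabolic (monotone_update_id hij))

lemma toMinimalParabolicCoset_smul (hij : i ⋖ j) (h : GLn F n) (C : Cosets F n) :
    toMinimalParabolicCoset hij (h • C) = h • toMinimalParabolicCoset hij C := by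
  induction C using QuotientGroup.induction_on
  rfl

lemma toMinimalParabolicCoset_eq_iff (hij : i ⋖ j) (C D : Cosets F n) :
    toMinimalParabolicCoset hij C = toMinimalParabolicCoset hij D ↔
      C.out⁻¹ * D.out ∈ minimalParabolic F i j := by
  conv_lhs => rw [← QuotientGroup.out_eq' C, ← QuotientGroup.out_eq' D]
  exact QuotientGroup.eq

end Parabolic

section Hecke

variable {F n K}

lemma permGL_mem_parabolic {α : Type*} [LinearOrder α] {b : Fin n → α} {π : Equiv.Perm (Fin n)}
    (hπ : ∀ a, b (π a) = b a) : permGL F n π ∈ parabolic F b := by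
  intro a c hca
  exact if_neg fun h : π c = a => hca.ne (by rw [← h, hπ])

lemma permGL_inv_mul_apply (π : Equiv.Perm (Fin n)) (g : GLn F n) (a c : Fin n) :
    ((permGL F n π)⁻¹ * g) a c = g (π a) c := by
  change ∑ d, permMat F n π⁻¹ a d * g d c = g (π a) c
  simp only [permMat, Equiv.Perm.inv_eq_iff_eq, ite_mul, one_mul, zero_mul, Finset.sum_ite_eq',
    Finset.mem_univ, if_true]

lemma permGL_swap_inv_mul_mem_Bsub_iff {i j : Fin n} (hij : i ⋖ j) (g : GLn F n) :
    (permGL F n (Equiv.swap i j))⁻¹ * g ∈ Bsub F n ↔ g ∈ minimalParabolic F i j ∧ g i i = 0 := by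
  have hs : permGL F n (Equiv.swap i j) ∈ minimalParabolic F i j :=
    permGL_mem_parabolic fun a => by
      simp only [Equiv.swap_apply_def, Function.update_apply, id_eq]
      grind
  rw [mem_Bsub_iff_of_covBy hij, Subgroup.mul_mem_cancel_left _ (inv_mem hs),
    permGL_inv_mul_apply, Equiv.swap_apply_right]

-- `[a : c]` is a point of the projective line over `F`: the summands detect `[0 : 1]` and
-- the points `[1 : t]` with `t ≠ 0`, so that only `[1 : 0]` is left out.
lemma ite_add_card_slopes {S : Type*} [AddMonoidWithOne S] {a c : F} (hac : a ≠ 0 ∨ c ≠ 0) :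
    ((if a = 0 then 1 else 0) + (Finset.univ.filter fun t => t ≠ 0 ∧ c = t * a).card : S) =
      if c = 0 then 0 else 1 := by
  by_cases ha : a = 0
  · have hc : c ≠ 0 := hac.resolve_left (not_not.2 ha)
    simp [ha, hc]
  · have hslope : ∀ t, t ≠ 0 ∧ c = t * a ↔ t = c / a ∧ c ≠ 0 := fun t => by
      rw [eq_div_iff ha]
      grind
    by_cases hc : c = 0 <;> simp [ha, hc, hslope, Finset.filter_eq']

lemma covBy_mk_succ {n k : ℕ} (hk : k + 1 < n) :
    (⟨k, Nat.lt_of_succ_lt hk⟩ : Fin n) ⋖ ⟨k + 1, hk⟩ := by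
  simp [Fin.covBy_iff]

lemma genGB_apply {k : ℕ} (hk : k + 1 < n) (C D : Cosets F n) :
    genGB F n K k C D =
      if toMinimalParabolicCoset (covBy_mk_succ hk) C =
          toMinimalParabolicCoset (covBy_mk_succ hk) D ∧ C ≠ D then 1 else 0 := by
  have hcov := covBy_mk_succ hk
  have heq : C = D ↔ C.out⁻¹ * D.out ∈ Bsub F n := by
    simpa using mk_out_mul_eq_iff C D 1
  simp only [genGB, dif_pos hk, mk_out_mul_eq_iff, permGL_swap_inv_mul_mem_Bsub_iff hcov,
    transvGL_inv_mul_mem_Bsub_iff hcov, toMinimalParabolicCoset_eq_iff, ne_eq, heq]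
  generalize C.out⁻¹ * D.out = g
  by_cases hP : g ∈ minimalParabolic F ⟨k, Nat.lt_of_succ_lt hk⟩ ⟨k + 1, hk⟩
  · have hB := mem_Bsub_iff_of_covBy hcov g
    simp only [hP, true_and] at hB
    have hcol : g ⟨k, Nat.lt_of_succ_lt hk⟩ ⟨k, Nat.lt_of_succ_lt hk⟩ ≠ 0 ∨
        g ⟨k + 1, hk⟩ ⟨k, Nat.lt_of_succ_lt hk⟩ ≠ 0 :=
      or_iff_not_imp_right.2 fun h0 =>
        (isUnit_diag_of_isUpperTriangular (hB.2 (not_not.1 h0)) g.isUnit _).ne_zero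
    simpa only [hP, true_and, hB, ite_not] using ite_add_card_slopes (S := K) hcol
  · simp [hP]

end Hecke

section Equivariance

/-- The algebra of `X × X` matrices that commute with the permutation of `X` induced by `g`. -/
def invariantMatrices {G X : Type*} [Group G] [MulAction G X] [Fintype X] [DecidableEq X]
    (S : Type*) [CommSemiring S] (g : G) : Subalgebra S (Matrix X X S) :=
  AlgHom.equalizer (Matrix.reindexAlgEquiv S S (MulAction.toPerm g).symm).toAlgHom (AlgHom.id S _)

lemma mem_invariantMatrices {G X S : Type*} [Group G] [MulAction G X] [Fintype X] [DecidableEq X]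
    [CommSemiring S] {g : G} {M : Matrix X X S} :
    M ∈ invariantMatrices S g ↔ ∀ x y, M (g • x) (g • y) = M x y :=
  Matrix.ext_iff.symm

variable {F n K}

lemma genGB_mem_invariantMatrices (h : GLn F n) (k : ℕ) :
    genGB F n K k ∈ invariantMatrices K h := by
  rw [mem_invariantMatrices]
  intro C D
  by_cases hk : k + 1 < n
  · simp only [genGB_apply hk, toMinimalParabolicCoset_smul, smul_left_cancel_iff, ne_eq]
  · simp only [genGB, dif_neg hk]

lemma prodGenGB_mem_invariantMatrices (h : GLn F n) (k : ℕ) :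
    prodGenGB F n K k ∈ invariantMatrices K h := by
  induction k with
  | zero => exact one_mem _
  | succ k ih => exact mul_mem (genGB_mem_invariantMatrices h k) ih

omit [Fintype F] [DecidableEq F] in
lemma support_col_zero_mul_of_mem_Bsub (g : GLn F (n + 1)) {b : GLn F (n + 1)}
    (hb : b ∈ Bsub F (n + 1)) :
    Function.support ((g * b).val.col 0) = Function.support (g.val.col 0) := by
  have hb0 : b 0 0 ≠ 0 := (isUnit_diag_of_isUpperTriangular hb b.isUnit 0).ne_zero
  ext a
  have hsum : (g * b) a 0 = g a 0 * b 0 0 :=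
    Fintype.sum_eq_single (0 : Fin (n + 1)) fun c hc =>
      mul_eq_zero_of_right _ (hb c 0 (Fin.pos_of_ne_zero hc))
  simp only [Function.mem_support, Matrix.col_apply, hsum, mul_ne_zero_iff_right hb0]

omit [Fintype F] [DecidableEq F] in
lemma pivotRow_mk (g : GLn F (n + 1)) {i : Fin (n + 1)}
    (hi : IsLeast (Function.support (g.val.col 0)) i) :
    pivotRow F (n + 1) (QuotientGroup.mk g) = i := by
  obtain ⟨⟨b, hb⟩, hout⟩ := QuotientGroup.mk_out_eq_mul (Bsub F (n + 1)) g
  rw [← support_col_zero_mul_of_mem_Bsub g hb, ← hout] at hi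
  have hset : {k | ∃ hk : k < n + 1,
      (QuotientGroup.mk g : Cosets F (n + 1)).out ⟨k, hk⟩ ⟨0, n.succ_pos⟩ ≠ 0} =
      Fin.val '' Function.support ((QuotientGroup.mk g : Cosets F (n + 1)).out.val.col 0) := by
    ext k
    exact ⟨fun ⟨hk, hne⟩ => ⟨⟨k, hk⟩, hne, rfl⟩, fun ⟨a, ha, hak⟩ => hak ▸ ⟨a.2, ha⟩⟩
  exact (congrArg sInf hset).trans (Fin.val_strictMono.monotone.map_isLeast hi).csInf_eq

omit [Fintype F] [DecidableEq F] in
lemma pivotRow_smul {h : GLn F n} (hlow : lowerTri (h : Matrix (Fin n) (Fin n) F))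
    (C : Cosets F n) : pivotRow F n (h • C) = pivotRow F n C := by
  cases n with
  | zero => simp [pivotRow]
  | succ n =>
    induction C using QuotientGroup.induction_on with | _ g
    obtain ⟨i, hi⟩ := (Function.support (g.val.col 0)).toFinite.exists_minimal
      (Function.support_nonempty_iff.2 (col_ne_zero_of_isUnit g.isUnit 0))
    have hdiag a := (isUnit_diag_of_isLowerTriangular hlow h.isUnit a).ne_zero
    have hleast := minimal_iff_isLeast.1 hi
    exact (pivotRow_mk (h * g) (isLeast_support_mulVec hlow hdiag hleast)).trans
      (pivotRow_mk g hleast).symm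

lemma XGB_mem_invariantMatrices (x : Fin n → K) {h : GLn F n}
    (hlow : lowerTri (h : Matrix (Fin n) (Fin n) F)) :
    XGB F n K x ∈ invariantMatrices K h := by
  simp only [mem_invariantMatrices, XGB, pivotRow_smul hlow, smul_left_cancel_iff, implies_true]

end Equivariance

theorem lower_triangular_commutes_with_TGB_general (F : Type) [Field F] [Fintype F]
    [DecidableEq F] (n : ℕ) (K : Type) [Field K] (_hq : (Fintype.card F : K) ≠ 0) (x : Fin n → K)
    (h : GLn F n) (hlow : lowerTri (h : Matrix (Fin n) (Fin n) F)) (C D : Cosets F n) :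
    TGB F n K x (h • C) (h • D) = TGB F n K x C D := by
  have hsum : ∑ k ∈ Finset.range n, prodGenGB F n K k ∈ invariantMatrices K h :=
    sum_mem fun k _ => prodGenGB_mem_invariantMatrices h k
  exact mem_invariantMatrices.1 (mul_mem hsum (XGB_mem_invariantMatrices x hlow)) C D

/-- Let `q` be a prime power (the cardinality of the finite field `F`)
and `x` arbitrary complex weights.  Left multiplication by a lower triangular `h ∈ B⁻`
commutes with the q-Tsetlin library operator on `ℂ[G/B]`: for every `h ∈ B⁻` and cosets
`gB`, the element `h · (gB · T_{G/B}(q,x))` equals `((hg)B) · T_{G/B}(q,x)`.  In matrix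
form (with `h • C` the left-multiplication action `g'B ↦ (hg')B` on cosets) this says that
the coefficient of `h • D` in `((hg)B) · T_{G/B}(q,x)` equals the coefficient of `D` in
`(gB) · T_{G/B}(q,x)`, for all cosets `D`. -/
theorem lower_triangular_commutes_with_TGB (F : Type) [Field F] [Fintype F]
    [DecidableEq F] (n : ℕ) (x : Fin n → ℂ) (h : GLn F n)
    (hlow : lowerTri (h : Matrix (Fin n) (Fin n) F)) (C D : Cosets F n) :
    TGB F n ℂ x (h • C) (h • D) = TGB F n ℂ x C D :=
  lower_triangular_commutes_with_TGB_general F n ℂ (Nat.cast_ne_zero.2 Fintype.card_ne_zero)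
    x h hlow C D

end QTsetlin
end
end

section
/- Let q ≥ 1 be real, let m = (m_1,…,m_ℓ) be a composition of n with all m_j ≥ 1, and let x = (x_1,…,x_n) be positive, m-compatible weights with x_1+⋯+x_n = 1. Let Ψ(q,x) be the unique stationary distribution of T_{S_n}(q,x). Then for all π, π' ∈ S_n with destd_m(π) = destd_m(π'), one has q^{inv(π)}·Ψ(q,x)_π = q^{inv(π')}·Ψ(q,x)_{π'}. -/
/-!
STATEMENT 0: stationary distribution of the q-Tsetlin library on permutations.
-/

open scoped Classical

noncomputable section

namespace QTsetlin

variable {K : Type} [Field K]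

/-- Number of inversions of a permutation (one-line notation `i ↦ π i`). -/
def invCount {n : ℕ} (π : Equiv.Perm (Fin n)) : ℕ :=
  (Finset.univ.filter fun p : Fin n × Fin n => p.1 < p.2 ∧ π p.2 < π p.1).card

/-- Matrix (row convention: row `π` is `π · T_{k+1}`) of the Hecke generator `T_{k+1}`
(paper indexing), which swaps the (0-based) positions `k` and `k+1`. -/
def genMat (n : ℕ) (q : K) (k : ℕ) :
    Matrix (Equiv.Perm (Fin n)) (Equiv.Perm (Fin n)) K := fun π σ =>
  if h : k + 1 < n then
    if π ⟨k + 1, h⟩ < π ⟨k, Nat.lt_of_succ_lt h⟩ then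
      (if σ = π * Equiv.swap ⟨k, Nat.lt_of_succ_lt h⟩ ⟨k + 1, h⟩ then q else 0)
    else
      (if σ = π * Equiv.swap ⟨k, Nat.lt_of_succ_lt h⟩ ⟨k + 1, h⟩ then 1 else 0)
        + (if σ = π then q - 1 else 0)
  else 0

/-- Matrix of the product `T_k T_{k-1} ⋯ T_1` (paper indexing); `prodGen 0 = 1`. -/
def prodGen (n : ℕ) (q : K) : ℕ → Matrix (Equiv.Perm (Fin n)) (Equiv.Perm (Fin n)) K
  | 0 => 1
  | k + 1 => genMat n q k * prodGen n q k

/-- Matrix of the weighting operator `X_{S_n}(q,x)`: `π ↦ (x_{π_1}/q^{n-π_1}) · π`. -/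
def XSn (n : ℕ) (q : K) (x : Fin n → K) :
    Matrix (Equiv.Perm (Fin n)) (Equiv.Perm (Fin n)) K := fun π σ =>
  if σ = π then
    (if h : 0 < n then x (π ⟨0, h⟩) / q ^ (n - 1 - (π ⟨0, h⟩ : ℕ)) else 0)
  else 0

/-- Matrix of the q-Tsetlin library operator
`T_{S_n}(q,x) = (∑_{i=1}^n T_{i-1} ⋯ T_1) ∘ X_{S_n}(q,x)` on `ℂS_n` (row convention). -/
def TSn (n : ℕ) (q : K) (x : Fin n → K) :
    Matrix (Equiv.Perm (Fin n)) (Equiv.Perm (Fin n)) K :=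
  (∑ k ∈ Finset.range n, prodGen n q k) * XSn n q x

/-- `κ(b; x)`: sort the tuple `b` weakly decreasingly, obtaining `(b_1 ≥ ⋯ ≥ b_k)`, and form
`∑_i x_{b_i} q^{i + b_i - k - 1}` (1-based positions and values; here values are 0-based). -/
def kappa {n : ℕ} (q : K) (x : Fin n → K) (b : List (Fin n)) : K :=
  let s := b.insertionSort (fun a c => c ≤ a)
  ∑ i : Fin s.length, x (s.get i) * q ^ ((i : ℤ) + ((s.get i : ℕ) + 1) - s.length)

/-- `k` is the (0-based) position of a left-to-right minimum of `π`. -/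
def isLRM {n : ℕ} (π : Equiv.Perm (Fin n)) (k : Fin n) : Prop :=
  ∀ i : Fin n, i < k → π k < π i

/-- `p_k`: the smallest (0-based) position `i < k` with `π_i < π_k`. -/
def pMin {n : ℕ} (π : Equiv.Perm (Fin n)) (k : Fin n) : ℕ :=
  sInf {i : ℕ | ∃ h : i < n, (⟨i, h⟩ : Fin n) < k ∧ π ⟨i, h⟩ < π k}

/-- The tuple of values `(π_{p_k}, …, π_k)`. -/
def segTo {n : ℕ} (π : Equiv.Perm (Fin n)) (k : Fin n) : List (Fin n) :=
  ((List.finRange n).filter fun i : Fin n =>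
    decide (pMin π k ≤ (i : ℕ) ∧ (i : ℕ) ≤ (k : ℕ))).map π

/-- The tuple of values `(π_{p_k}, …, π_{k-1})`. -/
def segBefore {n : ℕ} (π : Equiv.Perm (Fin n)) (k : Fin n) : List (Fin n) :=
  ((List.finRange n).filter fun i : Fin n =>
    decide (pMin π k ≤ (i : ℕ) ∧ (i : ℕ) < (k : ℕ))).map π

/-- The tuple of values `(π_1, …, π_{k-1})` when `k` is the (0-based) position `k`
(i.e. the values at positions strictly before `k`). -/
def prefixVals {n : ℕ} (π : Equiv.Perm (Fin n)) (k : Fin n) : List (Fin n) :=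
  ((List.finRange n).filter fun i : Fin n => decide (i < k)).map π

/-- The claimed formula for the stationary distribution of the q-Tsetlin library on
permutations.  Note `List.finRange n` is the tuple of all values, whose weakly decreasing
rearrangement is the long permutation `w₀`, so `kappa q x (List.finRange n) = κ(w₀; x)`.
Products over `k` with `(k : ℕ) + 1 < n` correspond to the paper's `k = 1, …, n-1`. -/
def psiFormula (n : ℕ) (q : K) (x : Fin n → K) (π : Equiv.Perm (Fin n)) : K :=
  q ^ (-(invCount π : ℤ)) *
    ((∏ k ∈ Finset.univ.filter fun k : Fin n => (k : ℕ) + 1 < n ∧ isLRM π k,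
        kappa q x [π k]) *
      (∏ k ∈ Finset.univ.filter fun k : Fin n => (k : ℕ) + 1 < n ∧ ¬ isLRM π k,
        (kappa q x (segTo π k) - q⁻¹ * kappa q x (segBefore π k)))) /
    (∏ k ∈ Finset.univ.filter fun k : Fin n => (k : ℕ) + 1 < n,
      (kappa q x (List.finRange n) - q ^ (((k : ℕ) : ℤ) - (n : ℤ)) * kappa q x (prefixVals π k)))

/-- `Ψ` is a stationary distribution for the Markov chain with (row-convention) transition
matrix `T` and total rate `c`: it is a nonnegative row vector with entries summing to `1`
such that `Ψ · T = c · Ψ`. -/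
def IsStationary {P : Type} [Fintype P] (T : Matrix P P ℝ) (c : ℝ) (Ψ : P → ℝ) : Prop :=
  (∀ p, 0 ≤ Ψ p) ∧ (∑ p, Ψ p = 1) ∧ Matrix.vecMul Ψ T = c • Ψ


/-- `n_j = m_1 + ⋯ + m_j` (the first `j` parts of the composition, `j : ℕ`). -/
def nsum (l : ℕ) (m : Fin l → ℕ) (j : ℕ) : ℕ :=
  ∑ t ∈ Finset.univ.filter fun t : Fin l => (t : ℕ) < j, m t

/-- The (0-based) index `j` of the block `M_{j+1}` containing the 0-based value `v`. -/
def blockOf (l : ℕ) (m : Fin l → ℕ) (v : ℕ) : ℕ :=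
  sInf {j : ℕ | v < nsum l m (j + 1)}

/-- The weights `x` are `m`-compatible: `y_i = x_i / q^{n-i}` is constant on blocks. -/
def mCompatible (n l : ℕ) (m : Fin l → ℕ) (q : ℝ) (x : Fin n → ℝ) : Prop :=
  ∀ i i' : Fin n, blockOf l m (i : ℕ) = blockOf l m (i' : ℕ) →
    x i / q ^ (n - 1 - (i : ℕ)) = x i' / q ^ (n - 1 - (i' : ℕ))

/-!
The Hecke algebra also acts on `ℂS_n` from the left, by exchanging the values `i` and `i + 1`. This
action commutes with every `T_k`, which exchanges positions, and with `X_{S_n}(q,x)` as soon as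
`y_i = y_{i+1}`; hence it preserves the eigenspace containing `Ψ`, which is one-dimensional by
Perron–Frobenius. So `Ψ` is an eigenvector of the left generator, and comparing total masses shows
that its eigenvalue is `q`. Read at a single permutation this is the claimed invariance under the
transposition of `i` and `i + 1`, and such transpositions generate the Young subgroup of the blocks,
whose orbits are the fibres of `destd_m`.
-/

section HeckeAction

variable {R : Type*} [CommRing R] {α : Type*} [LinearOrder α] {i j a b : α}

lemma swap_lt_swap_iff (hij : i ⋖ j) (hab : s(a, b) ≠ s(i, j)) :
    Equiv.swap i j a < Equiv.swap i j b ↔ a < b := by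
  have hlt : ∀ c, c < j ↔ c ≤ i := fun c => hij.lt_iff_le_left
  have hgt : ∀ c, i < c ↔ j ≤ c := fun c => hij.lt_iff_le_right
  rw [Ne, Sym2.eq_iff] at hab
  simp only [Equiv.swap_apply_def]
  grind

lemma swap_mul_eq_mul_swap_of_mk_eq {σ : Equiv.Perm α} (h : s(σ a, σ b) = s(i, j)) :
    Equiv.swap i j * σ = σ * Equiv.swap a b := by
  rw [Equiv.mul_swap_eq_swap_mul]
  rcases Sym2.eq_iff.1 h with ⟨rfl, rfl⟩ | ⟨rfl, rfl⟩
  · rfl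
  · rw [Equiv.swap_comm]

variable [Fintype α]

/-- Right multiplication by the Hecke generator that swaps the entries in positions `a` and `b`,
as a matrix acting on row vectors. It is a Hecke generator only when `a ⋖ b`. -/
def rightHecke (q : R) (a b : α) : Matrix (Equiv.Perm α) (Equiv.Perm α) R := fun π σ =>
  if π b < π a then
    (if σ = π * Equiv.swap a b then q else 0)
  else
    (if σ = π * Equiv.swap a b then 1 else 0) + (if σ = π then q - 1 else 0)

/-- Left multiplication by the Hecke generator that swaps the values `i` and `j`, obtained from
right multiplication through the anti-automorphism `π ↦ π⁻¹`. -/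
def leftHecke (q : R) (i j : α) : Matrix (Equiv.Perm α) (Equiv.Perm α) R :=
  (rightHecke q i j).submatrix (Equiv.inv (Equiv.Perm α)) (Equiv.inv (Equiv.Perm α))

lemma rightHecke_apply_eq_add (q : R) (hab : a ≠ b) (π σ : Equiv.Perm α) :
    rightHecke q a b π σ =
      (if π = σ * Equiv.swap a b then (if σ a < σ b then q else 1) else 0) +
        (if π = σ then (if σ a < σ b then q - 1 else 0) else 0) := by
  have hσ : σ a ≠ σ b := σ.injective.ne hab
  have hswap : σ = π * Equiv.swap a b ↔ π = σ * Equiv.swap a b := by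
    constructor <;> rintro rfl <;> simp [mul_assoc]
  have hne : σ * Equiv.swap a b ≠ σ := by simpa [Equiv.swap_eq_one_iff] using hab
  simp only [rightHecke, hswap]
  by_cases hs : π = σ * Equiv.swap a b
  · subst hs
    rcases hσ.lt_or_gt with h | h <;> simp [h, h.not_gt, hne, hne.symm]
  · by_cases h1 : π = σ
    · subst h1
      rcases hσ.lt_or_gt with h | h <;> simp [h, h.not_gt, hs]
    · simp [hs, h1, Ne.symm h1]

lemma vecMul_rightHecke_apply (q : R) (hab : a ≠ b) (f : Equiv.Perm α → R) (σ : Equiv.Perm α) :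
    Matrix.vecMul f (rightHecke q a b) σ =
      (if σ a < σ b then q else 1) * f (σ * Equiv.swap a b) +
        (if σ a < σ b then q - 1 else 0) * f σ := by
  simp only [Matrix.vecMul, dotProduct, rightHecke_apply_eq_add q hab, mul_add, mul_ite, mul_zero,
    Finset.sum_add_distrib, Finset.sum_ite_eq', Finset.mem_univ, if_true]
  split_ifs <;> ring

lemma vecMul_leftHecke_apply (q : R) (hij : i ≠ j) (f : Equiv.Perm α → R) (σ : Equiv.Perm α) :
    Matrix.vecMul f (leftHecke q i j) σ =
      (if σ⁻¹ i < σ⁻¹ j then q else 1) * f (Equiv.swap i j * σ) +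
        (if σ⁻¹ i < σ⁻¹ j then q - 1 else 0) * f σ := by
  rw [leftHecke, Matrix.submatrix_vecMul_equiv, Function.comp_apply, vecMul_rightHecke_apply q hij]
  simp

lemma rightHecke_mulVec_one (q : R) (a b : α) :
    Matrix.mulVec (rightHecke q a b) 1 = fun _ => q := by
  ext π
  simp only [Matrix.mulVec, dotProduct, Pi.one_apply, mul_one, rightHecke]
  split_ifs <;> simp [Finset.sum_add_distrib]

lemma sum_vecMul_leftHecke (q : R) (i j : α) (f : Equiv.Perm α → R) :
    ∑ σ, Matrix.vecMul f (leftHecke q i j) σ = q * ∑ σ, f σ := by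
  have hrow : Matrix.mulVec (leftHecke q i j) 1 = fun _ => q := by
    rw [leftHecke, Matrix.submatrix_mulVec_equiv]
    exact congrArg (· ∘ _) (rightHecke_mulVec_one q i j)
  rw [← dotProduct_one, ← Matrix.dotProduct_mulVec, hrow, dotProduct, Finset.mul_sum]
  simp only [mul_comm]

lemma vecMul_leftHecke_apply_eq_vecMul_rightHecke_apply (q : R) (hij : i < j) (hab : a < b)
    (f : Equiv.Perm α → R) {σ : Equiv.Perm α} (h : s(σ a, σ b) = s(i, j)) :
    Matrix.vecMul f (leftHecke q i j) σ = Matrix.vecMul f (rightHecke q a b) σ := by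
  have hlt : σ⁻¹ i < σ⁻¹ j ↔ σ a < σ b := by
    rcases Sym2.eq_iff.1 h with ⟨rfl, rfl⟩ | ⟨rfl, rfl⟩
    · simp [hab, hij]
    · simp [hab.not_gt, hij.not_gt]
  rw [vecMul_leftHecke_apply q hij.ne, vecMul_rightHecke_apply q hab.ne,
    swap_mul_eq_mul_swap_of_mk_eq h]
  simp only [hlt]

theorem commute_leftHecke_rightHecke (q : R) (hij : i ⋖ j) (hab : a ⋖ b) :
    Commute (leftHecke q i j) (rightHecke q a b) := by
  refine Matrix.ext_iff_vecMul.2 fun f => funext fun σ => ?_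
  simp only [← Matrix.vecMul_vecMul]
  by_cases hσ : s(σ a, σ b) = s(i, j)
  · -- On `σ` and `σ * swap a b` the two operators are given by the same formula.
    have hσ' : s((σ * Equiv.swap a b) a, (σ * Equiv.swap a b) b) = s(i, j) := by
      simpa [Sym2.eq_swap] using hσ
    have heq := fun g (τ : Equiv.Perm α) =>
      vecMul_leftHecke_apply_eq_vecMul_rightHecke_apply q hij.lt hab.lt g (σ := τ)
    rw [← heq _ _ hσ]
    simp only [vecMul_rightHecke_apply q hab.ne, heq _ _ hσ, heq _ _ hσ']
  · have hright : (Equiv.swap i j * σ) a < (Equiv.swap i j * σ) b ↔ σ a < σ b :=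
      swap_lt_swap_iff hij hσ
    have hleft : (σ * Equiv.swap a b)⁻¹ i < (σ * Equiv.swap a b)⁻¹ j ↔ σ⁻¹ i < σ⁻¹ j := by
      rw [mul_inv_rev, Equiv.swap_inv]
      refine swap_lt_swap_iff hab fun h => hσ ?_
      simpa using (congrArg (Sym2.map σ) h).symm
    simp only [vecMul_rightHecke_apply q hab.ne, vecMul_leftHecke_apply q hij.ne, hleft, hright,
      mul_assoc]
    ring

end HeckeAction

section Tsetlin

variable {n : ℕ} {i j : Fin n}

/-- The weights `y_i = x_i / q^{n-i}` (1-based `i`) by which the operator `X_{S_n}(q,x)` scales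
the permutations beginning with `i`. -/
def scaledWeight (q : K) (x : Fin n → K) (i : Fin n) : K :=
  x i / q ^ (n - 1 - (i : ℕ))

lemma genMat_eq_rightHecke (q : K) {k : ℕ} (hk : k + 1 < n) :
    genMat n q k = rightHecke q ⟨k, Nat.lt_of_succ_lt hk⟩ ⟨k + 1, hk⟩ := by
  ext π σ
  simp only [genMat, dif_pos hk, rightHecke]

lemma genMat_eq_zero (q : K) {k : ℕ} (hk : ¬ k + 1 < n) : genMat n q k = 0 := by
  ext π σ
  simp only [genMat, dif_neg hk, Matrix.zero_apply]

lemma XSn_eq_diagonal (hn : 0 < n) (q : K) (x : Fin n → K) :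
    XSn n q x = Matrix.diagonal fun π => scaledWeight q x (π ⟨0, hn⟩) := by
  ext π σ
  simp only [XSn, dif_pos hn, scaledWeight, Matrix.diagonal_apply, eq_comm]

lemma commute_leftHecke_prodGen (q : K) (hij : i ⋖ j) (k : ℕ) :
    Commute (leftHecke q i j) (prodGen n q k) := by
  induction k with
  | zero => exact Commute.one_right _
  | succ k ih =>
    refine Commute.mul_right ?_ ih
    by_cases hk : k + 1 < n
    · rw [genMat_eq_rightHecke q hk]
      exact commute_leftHecke_rightHecke q hij (by simp [Fin.covBy_iff])
    · rw [genMat_eq_zero q hk]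
      exact Commute.zero_right _

lemma commute_leftHecke_XSn (q : K) (hij : i ⋖ j) {x : Fin n → K}
    (hx : scaledWeight q x i = scaledWeight q x j) :
    Commute (leftHecke q i j) (XSn n q x) := by
  have hn : 0 < n := i.pos
  refine Matrix.ext_iff_vecMul.2 fun f => funext fun σ => ?_
  simp only [← Matrix.vecMul_vecMul, XSn_eq_diagonal hn, Matrix.vecMul_diagonal,
    vecMul_leftHecke_apply q hij.ne, Equiv.Perm.mul_apply, Equiv.apply_swap_eq_self hx]
  ring

theorem commute_leftHecke_TSn (q : K) (hij : i ⋖ j) {x : Fin n → K}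
    (hx : scaledWeight q x i = scaledWeight q x j) :
    Commute (leftHecke q i j) (TSn n q x) :=
  (Commute.sum_right _ _ _ fun k _ => commute_leftHecke_prodGen q hij k).mul_right
    (commute_leftHecke_XSn q hij hx)

lemma invCount_swap_mul (hij : i ⋖ j) {σ : Equiv.Perm (Fin n)} (h : σ⁻¹ i < σ⁻¹ j) :
    invCount (Equiv.swap i j * σ) = invCount σ + 1 := by
  have hnotMem : (σ⁻¹ i, σ⁻¹ j) ∉
      Finset.univ.filter fun p : Fin n × Fin n => p.1 < p.2 ∧ σ p.2 < σ p.1 := by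
    simp [hij.le]
  rw [invCount, invCount, ← Finset.card_insert_of_notMem hnotMem]
  congr 1
  ext ⟨a, b⟩
  rw [Finset.mem_insert, Finset.mem_filter, Finset.mem_filter]
  simp only [Finset.mem_univ, true_and, Prod.mk.injEq, Equiv.Perm.mul_apply,
    Equiv.Perm.eq_inv_iff_eq]
  by_cases hab : s(σ b, σ a) = s(i, j)
  · rcases Sym2.eq_iff.1 hab with ⟨rfl, rfl⟩ | ⟨rfl, rfl⟩
    · rw [Equiv.Perm.coe_inv, Equiv.symm_apply_apply, Equiv.symm_apply_apply] at h
      simp [h.not_gt, h.ne']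
    · rw [Equiv.Perm.coe_inv, Equiv.symm_apply_apply, Equiv.symm_apply_apply] at h
      simp [h, hij.lt]
  · rw [swap_lt_swap_iff hij hab]
    have hne : ¬ (σ a = i ∧ σ b = j) := fun ⟨ha, hb⟩ => hab (by rw [ha, hb, Sym2.eq_swap])
    simp only [hne, false_or]

end Tsetlin

section PerronFrobenius

variable {P : Type*} [Fintype P] {A : Matrix P P K} {c : K} {f g : P → K}

lemma vecMul_pow_eq_smul (hf : Matrix.vecMul f A = c • f) (k : ℕ) :
    Matrix.vecMul f (A ^ k) = c ^ k • f := by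
  induction k with
  | zero => simp
  | succ k ih =>
    rw [pow_succ, ← Matrix.vecMul_vecMul, ih, Matrix.smul_vecMul, hf, smul_smul, pow_succ]

variable [LinearOrder K] [IsStrictOrderedRing K]

lemma mul_apply_pos {B : Matrix P P K} (hA : ∀ i j, 0 ≤ A i j) (hB : ∀ i j, 0 ≤ B i j)
    {i j k : P} (hij : 0 < A i j) (hjk : 0 < B j k) : 0 < (A * B) i k :=
  Finset.sum_pos' (fun l _ => mul_nonneg (hA i l) (hB l k))
    ⟨j, Finset.mem_univ j, mul_pos hij hjk⟩

lemma pos_of_vecMul_eq_smul (hA : A.IsIrreducible) (hf0 : 0 ≤ f) (hf : Matrix.vecMul f A = c • f)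
    (hne : f ≠ 0) (p : P) : 0 < f p := by
  refine (hf0 p).lt_of_ne' fun hp => hne (funext fun r => ?_)
  obtain ⟨k, -, hk⟩ := (Matrix.isIrreducible_iff_exists_pow_pos hA.nonneg).1 hA r p
  have hsum : ∑ s, f s * (A ^ k) s p = 0 := by
    simpa [hp, Matrix.vecMul, dotProduct] using congrFun (vecMul_pow_eq_smul hf k) p
  rw [Finset.sum_eq_zero_iff_of_nonneg fun s _ =>
    mul_nonneg (hf0 s) (Matrix.pow_apply_nonneg hA.nonneg k s p)] at hsum
  exact (mul_eq_zero.1 (hsum r (Finset.mem_univ r))).resolve_right hk.ne'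

theorem exists_eq_smul_of_vecMul_eq_smul (hA : A.IsIrreducible) (hf0 : 0 ≤ f) (hne : f ≠ 0)
    (hf : Matrix.vecMul f A = c • f) (hg : Matrix.vecMul g A = c • g) : ∃ t : K, g = t • f := by
  have hpos := pos_of_vecMul_eq_smul hA hf0 hf hne
  obtain ⟨r, -⟩ := Function.ne_iff.1 hne
  have : Nonempty P := ⟨r⟩
  obtain ⟨p, hp⟩ := Finite.exists_min fun p => g p / f p
  -- The multiple is the largest one for which `g - t • f` is nonnegative: that eigenvector
  -- vanishes somewhere, hence everywhere.
  set t := g p / f p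
  refine ⟨t, sub_eq_zero.1 (by_contra fun hdiff => ?_)⟩
  have hnonneg : 0 ≤ g - t • f := fun s => by
    simpa using (le_div_iff₀ (hpos s)).1 (hp s)
  have heigen : Matrix.vecMul (g - t • f) A = c • (g - t • f) := by
    rw [Matrix.sub_vecMul, Matrix.smul_vecMul, hf, hg, smul_sub, smul_comm]
  have hzero : (g - t • f) p = 0 := by simp [t, (hpos p).ne']
  exact (pos_of_vecMul_eq_smul hA hnonneg heigen hdiff p).ne' hzero

end PerronFrobenius

section YoungSubgroup

variable {α β : Type*} [LinearOrder α]

/-- The adjacent transpositions preserving the labelling `B`. They generate the Young subgroup of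
the blocks of `B` when `B` is monotone. -/
def youngGenerators (B : α → β) : Set (Equiv.Perm α) :=
  {s | ∃ i j, i ⋖ j ∧ B i = B j ∧ s = Equiv.swap i j}

theorem mem_closure_youngGenerators [Finite α] [PartialOrder β] {B : α → β} (hB : Monotone B)
    {g : Equiv.Perm α} (hg : ∀ a, B (g a) = B a) : g ∈ Subgroup.closure (youngGenerators B) := by
  let : Fintype α := Fintype.ofFinite α
  let : LocallyFiniteOrder α := Fintype.toLocallyFiniteOrder
  have horbit : ∀ a b, a ≤ b → B a = B b →
      b ∈ MulAction.orbit (Subgroup.closure (youngGenerators B)) a := by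
    intro a b hab
    induction le_iff_reflTransGen_covBy.1 hab with
    | refl => exact fun _ => MulAction.mem_orbit_self _
    | @tail c d hac hcd ih =>
      intro had
      have hac' : a ≤ c := le_iff_reflTransGen_covBy.2 hac
      have hBcd : B c = B d := (hB hcd.le).antisymm (had ▸ hB hac')
      have hswap : Equiv.swap c d ∈ Subgroup.closure (youngGenerators B) :=
        Subgroup.subset_closure ⟨c, d, hcd, hBcd, rfl⟩
      rw [← MulAction.orbit_eq_iff.2 (ih hac' (had.trans hBcd.symm))]
      exact ⟨⟨_, hswap⟩, Equiv.swap_apply_left c d⟩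
  refine (mem_closure_isSwap ?_).2 ⟨Set.toFinite _, fun a => ?_⟩
  · rintro _ ⟨i, j, hij, -, rfl⟩
    exact ⟨i, j, hij.ne, rfl⟩
  · rcases le_total a (g a) with h | h
    · exact horbit a (g a) h (hg a).symm
    · exact MulAction.mem_orbit_symm.1 (horbit (g a) a h (hg a))

end YoungSubgroup

section Irreducibility

variable {n : ℕ}

lemma cycleRange_of_covBy {i j : Fin n} (hij : i ⋖ j) :
    Fin.cycleRange j = Fin.cycleRange i * Equiv.swap i j := by
  have hval : (i : ℕ) + 1 = j := by simpa [Fin.covBy_iff] using hij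
  have : NeZero n := ⟨i.pos.ne'⟩
  ext k
  rw [Equiv.Perm.mul_apply]
  rcases eq_or_ne k i with rfl | hki
  · rw [Equiv.swap_apply_left, Fin.coe_cycleRange_of_lt hij.lt, Fin.cycleRange_of_gt hij.lt, hval]
  rcases eq_or_ne k j with rfl | hkj
  · rw [Equiv.swap_apply_right, Fin.cycleRange_self, Fin.cycleRange_self]
  rw [Equiv.swap_apply_of_ne_of_ne hki hkj]
  rcases hki.lt_or_gt with h | h
  · rw [Fin.coe_cycleRange_of_lt h, Fin.coe_cycleRange_of_lt (h.trans hij.lt)]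
  · rw [Fin.cycleRange_of_gt h, Fin.cycleRange_of_gt ((hij.ge_of_gt h).lt_of_ne' hkj)]

lemma submonoidClosure_range_cycleRange_inv :
    Submonoid.closure (Set.range fun k : Fin n => (Fin.cycleRange k)⁻¹) = ⊤ := by
  rw [← Subgroup.closure_toSubmonoid_of_finite, Submonoid.eq_top_iff']
  intro g
  refine (Subgroup.closure_le _).2 ?_
    (mem_closure_youngGenerators (B := fun _ : Fin n => ()) monotone_const fun _ => rfl)
  rintro _ ⟨i, j, hij, -, rfl⟩
  have hswap : Equiv.swap i j = (Fin.cycleRange i)⁻¹ * Fin.cycleRange j := by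
    rw [cycleRange_of_covBy hij, inv_mul_cancel_left]
  have hmem : ∀ k : Fin n, (Fin.cycleRange k)⁻¹ ∈
      Subgroup.closure (Set.range fun k : Fin n => (Fin.cycleRange k)⁻¹) := fun k =>
    Subgroup.subset_closure ⟨k, rfl⟩
  rw [hswap]
  exact mul_mem (hmem i) (inv_mem_iff.1 (hmem j))

variable [LinearOrder K] [IsStrictOrderedRing K] {q : K}

lemma genMat_nonneg (hq : 1 ≤ q) (k : ℕ) (π σ : Equiv.Perm (Fin n)) : 0 ≤ genMat n q k π σ := by
  unfold genMat
  split_ifs <;> linarith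

lemma genMat_mul_swap_pos (hq : 1 ≤ q) {k : ℕ} (hk : k + 1 < n) (π : Equiv.Perm (Fin n)) :
    0 < genMat n q k π (π * Equiv.swap ⟨k, Nat.lt_of_succ_lt hk⟩ ⟨k + 1, hk⟩) := by
  simp only [genMat, dif_pos hk, if_true]
  split_ifs <;> linarith

lemma prodGen_nonneg (hq : 1 ≤ q) (k : ℕ) (π σ : Equiv.Perm (Fin n)) :
    0 ≤ prodGen n q k π σ := by
  induction k generalizing π with
  | zero => simp only [prodGen, Matrix.one_apply]; split_ifs <;> positivity
  | succ k ih => exact Finset.sum_nonneg fun τ _ => mul_nonneg (genMat_nonneg hq k π τ) (ih τ)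

lemma prodGen_mul_cycleRange_inv_pos (hq : 1 ≤ q) (k : Fin n) (π : Equiv.Perm (Fin n)) :
    0 < prodGen n q k π (π * (Fin.cycleRange k)⁻¹) := by
  obtain ⟨k, hk⟩ := k
  induction k generalizing π with
  | zero =>
    rw [prodGen, Fin.cycleRange_mk_zero, inv_one, mul_one, Matrix.one_apply_eq]
    exact one_pos
  | succ k ih =>
    have hcov : (⟨k, Nat.lt_of_succ_lt hk⟩ : Fin n) ⋖ ⟨k + 1, hk⟩ := by simp [Fin.covBy_iff]
    rw [cycleRange_of_covBy hcov, mul_inv_rev, Equiv.swap_inv, ← mul_assoc]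
    exact mul_apply_pos (genMat_nonneg hq k) (prodGen_nonneg hq k) (genMat_mul_swap_pos hq hk π)
      (ih _ _)

variable {x : Fin n → K}

lemma scaledWeight_pos (hq : 0 < q) (hx : ∀ i, 0 < x i) (i : Fin n) : 0 < scaledWeight q x i :=
  div_pos (hx i) (pow_pos hq _)

lemma TSn_nonneg (hn : 0 < n) (hq : 1 ≤ q) (hx : ∀ i, 0 < x i) (π σ : Equiv.Perm (Fin n)) :
    0 ≤ TSn n q x π σ := by
  rw [TSn, XSn_eq_diagonal hn, Matrix.mul_diagonal, Matrix.sum_apply]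
  exact mul_nonneg (Finset.sum_nonneg fun k _ => prodGen_nonneg hq k π σ)
    (scaledWeight_pos (zero_lt_one.trans_le hq) hx _).le

lemma TSn_mul_cycleRange_inv_pos (hq : 1 ≤ q) (hx : ∀ i, 0 < x i) (k : Fin n)
    (π : Equiv.Perm (Fin n)) : 0 < TSn n q x π (π * (Fin.cycleRange k)⁻¹) := by
  rw [TSn, XSn_eq_diagonal k.pos, Matrix.mul_diagonal, Matrix.sum_apply]
  refine mul_pos (Finset.sum_pos' (fun k _ => prodGen_nonneg hq k _ _) ?_)
    (scaledWeight_pos (zero_lt_one.trans_le hq) hx _)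
  exact ⟨k, Finset.mem_range.2 k.isLt, prodGen_mul_cycleRange_inv_pos hq k π⟩

theorem TSn_isIrreducible (hn : 0 < n) (hq : 1 ≤ q) (hx : ∀ i, 0 < x i) :
    (TSn n q x).IsIrreducible := by
  have hnonneg := TSn_nonneg hn hq hx
  have hreach : ∀ g, ∀ π : Equiv.Perm (Fin n), ∃ k > 0, 0 < (TSn n q x ^ k) π (π * g) := by
    intro g
    have hg : g ∈ Submonoid.closure (Set.range fun k : Fin n => (Fin.cycleRange k)⁻¹) := by
      rw [submonoidClosure_range_cycleRange_inv]; exact Submonoid.mem_top g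
    induction hg using Submonoid.closure_induction_right with
    | one =>
      intro π
      refine ⟨1, one_pos, ?_⟩
      simpa using TSn_mul_cycleRange_inv_pos hq hx ⟨0, hn⟩ π
    | mul_right g _ s hs ih =>
      intro π
      obtain ⟨i, rfl⟩ := hs
      obtain ⟨k, -, hk⟩ := ih π
      refine ⟨k + 1, k.succ_pos, ?_⟩
      rw [pow_succ, ← mul_assoc]
      exact mul_apply_pos (Matrix.pow_apply_nonneg hnonneg k) hnonneg hk
        (TSn_mul_cycleRange_inv_pos hq hx i (π * g))
  refine (Matrix.isIrreducible_iff_exists_pow_pos hnonneg).2 fun π σ => ?_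
  simpa using hreach (π⁻¹ * σ) π

end Irreducibility

section Stationary

variable [LinearOrder K] [IsStrictOrderedRing K] {n : ℕ} {q c : K} {x : Fin n → K}
  {Ψ : Equiv.Perm (Fin n) → K}

theorem vecMul_leftHecke_eq_smul (hq : 1 ≤ q) (hx : ∀ i, 0 < x i) (hΨ0 : 0 ≤ Ψ)
    (hΨ : Matrix.vecMul Ψ (TSn n q x) = c • Ψ) {i j : Fin n} (hij : i ⋖ j)
    (hy : scaledWeight q x i = scaledWeight q x j) :
    Matrix.vecMul Ψ (leftHecke q i j) = q • Ψ := by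
  rcases eq_or_ne Ψ 0 with rfl | hne
  · simp
  have hirr := TSn_isIrreducible i.pos hq hx
  have heigen : Matrix.vecMul (Matrix.vecMul Ψ (leftHecke q i j)) (TSn n q x) =
      c • Matrix.vecMul Ψ (leftHecke q i j) := by
    rw [Matrix.vecMul_vecMul, (commute_leftHecke_TSn q hij hy).eq, ← Matrix.vecMul_vecMul, hΨ,
      Matrix.smul_vecMul]
  obtain ⟨t, ht⟩ := exists_eq_smul_of_vecMul_eq_smul hirr hΨ0 hne hΨ heigen
  have hsum : t * ∑ σ, Ψ σ = q * ∑ σ, Ψ σ := by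
    rw [← sum_vecMul_leftHecke q i j Ψ, ht, Finset.mul_sum]
    simp only [Pi.smul_apply, smul_eq_mul]
  have hpos : 0 < ∑ σ, Ψ σ :=
    Finset.sum_pos (fun σ _ => pos_of_vecMul_eq_smul hirr hΨ0 hΨ hne σ) Finset.univ_nonempty
  rw [ht, mul_right_cancel₀ hpos.ne' hsum]

theorem pow_invCount_mul_swap_mul (hq : 1 ≤ q) (hx : ∀ i, 0 < x i) (hΨ0 : 0 ≤ Ψ)
    (hΨ : Matrix.vecMul Ψ (TSn n q x) = c • Ψ) {i j : Fin n} (hij : i ⋖ j)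
    (hy : scaledWeight q x i = scaledWeight q x j) (σ : Equiv.Perm (Fin n)) :
    q ^ invCount (Equiv.swap i j * σ) * Ψ (Equiv.swap i j * σ) = q ^ invCount σ * Ψ σ := by
  wlog hσ : σ⁻¹ i < σ⁻¹ j generalizing σ
  · have hσ' : σ⁻¹ j < σ⁻¹ i := (σ⁻¹.injective.ne hij.ne').lt_of_le (not_lt.1 hσ)
    simpa using (this (Equiv.swap i j * σ) (by simpa using hσ')).symm
  have hσ' : ¬ (Equiv.swap i j * σ)⁻¹ i < (Equiv.swap i j * σ)⁻¹ j := by simpa using hσ.le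
  have hΨσ : Ψ σ = q * Ψ (Equiv.swap i j * σ) := by
    simpa only [vecMul_leftHecke_apply q hij.ne, if_neg hσ', Equiv.swap_mul_self_mul, one_mul,
      zero_mul, add_zero, Pi.smul_apply, smul_eq_mul] using
      congrFun (vecMul_leftHecke_eq_smul hq hx hΨ0 hΨ hij hy) (Equiv.swap i j * σ)
  rw [invCount_swap_mul hij hσ, hΨσ, pow_succ, mul_assoc]

theorem qTsetlin_perm_destd_invariance_general {β : Type*} [PartialOrder β] {B : Fin n → β}
    (hB : Monotone B) (hq : 1 ≤ q) (hx : ∀ i, 0 < x i)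
    (hcompat : ∀ i j, B i = B j → scaledWeight q x i = scaledWeight q x j) (hΨ0 : 0 ≤ Ψ)
    (hΨ : Matrix.vecMul Ψ (TSn n q x) = c • Ψ) {π π' : Equiv.Perm (Fin n)}
    (hdestd : ∀ p, B (π p) = B (π' p)) :
    q ^ invCount π * Ψ π = q ^ invCount π' * Ψ π' := by
  have hinv : ∀ g ∈ Subgroup.closure (youngGenerators B), ∀ σ,
      q ^ invCount (g * σ) * Ψ (g * σ) = q ^ invCount σ * Ψ σ := by
    intro g hg
    induction hg using Subgroup.closure_induction with
    | mem s hs =>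
      obtain ⟨i, j, hij, hBij, rfl⟩ := hs
      exact pow_invCount_mul_swap_mul hq hx hΨ0 hΨ hij (hcompat i j hBij)
    | one => simp
    | mul g h _ _ ihg ihh => intro σ; rw [mul_assoc, ihg, ihh]
    | inv g _ ih => intro σ; simpa using (ih (g⁻¹ * σ)).symm
  have hmem : π * π'⁻¹ ∈ Subgroup.closure (youngGenerators B) :=
    mem_closure_youngGenerators hB fun a => by simpa using hdestd (π'⁻¹ a)
  simpa using hinv _ hmem π'

end Stationary

lemma blockOf_le_blockOf {l : ℕ} (m : Fin l → ℕ) {v w : ℕ} (hvw : v ≤ w) (hw : w < ∑ j, m j) :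
    blockOf l m v ≤ blockOf l m w := by
  have hnsum : nsum l m (l + 1) = ∑ j, m j := by
    rw [nsum, Finset.filter_true_of_mem fun t _ => by omega]
  have hmem : w < nsum l m (blockOf l m w + 1) :=
    Nat.sInf_mem (s := {j | w < nsum l m (j + 1)}) ⟨l, by simpa [hnsum] using hw⟩
  exact Nat.sInf_le (hvw.trans_lt hmem)

/-- For real `q ≥ 1`, a composition `m` of `n` with positive parts and
positive `m`-compatible weights `x` summing to `1`, any stationary distribution `Ψ` of
`T_{S_n}(q,x)` satisfies `q^{inv(π)} Ψ_π = q^{inv(π')} Ψ_{π'}` whenever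
`destd_m(π) = destd_m(π')` (i.e. `π` and `π'` become the same word after replacing every
value by the index of its block). -/
theorem qTsetlin_perm_destd_invariance (n l : ℕ) (hn : 1 ≤ n) (q : ℝ) (hq : 1 ≤ q)
    (m : Fin l → ℕ) (hm : ∀ j, 1 ≤ m j) (hmn : ∑ j, m j = n)
    (x : Fin n → ℝ) (hx : ∀ i, 0 < x i) (hx1 : ∑ i, x i = 1)
    (hcompat : mCompatible n l m q x)
    (Ψ : Equiv.Perm (Fin n) → ℝ) (hΨ : IsStationary (TSn n q x) (∑ i, x i) Ψ)
    (π π' : Equiv.Perm (Fin n))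
    (hdestd : ∀ p : Fin n, blockOf l m ((π p : ℕ)) = blockOf l m ((π' p : ℕ))) :
    q ^ invCount π * Ψ π = q ^ invCount π' * Ψ π' := by
  have hmono : Monotone fun i : Fin n => blockOf l m i := fun i i' hii' =>
    blockOf_le_blockOf m hii' (hmn.symm ▸ i'.isLt)
  exact qTsetlin_perm_destd_invariance_general hmono hq hx hcompat hΨ.1 hΨ.2.2 hdestd

end QTsetlin
end
end
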